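/- Let U ⊆ ℝᵐ be open, let λ : U → ℝ be smooth, and let f be a real polynomial with derivative f′. Define the matrix-valued map A : U → Mat_m(ℝ) by A(x) = f(J_m(λ(x))). Then for every column index i ∈ {1,…,m} and every x ∈ U: Σ_{s=1}^m ∂/∂x^s [A(x)]_{s,i} = Σ_{s=1}^m (∂λ/∂x^s)(x) · [f′(J_m(λ(x)))]_{s,i}. -/

import Mathlib

open scoped BigOperators

/-- Partial derivative of `f : ℝᵐ → ℝ` in the `s`-th coordinate direction. -/
noncomputable def pd {m : ℕ} (f : (Fin m → ℝ) → ℝ) (s : Fin m) (x : Fin m → ℝ) : ℝ :=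
  fderiv ℝ f x (Pi.single s 1)

/-- The `m × m` Jordan block with eigenvalue `lam`: `lam` on the diagonal,
`1` directly above the diagonal, `0` elsewhere. -/
def jordanBlock (m : ℕ) (lam : ℝ) : Matrix (Fin m) (Fin m) ℝ :=
  fun i j => if (j : ℕ) = i then lam else if (j : ℕ) = (i : ℕ) + 1 then 1 else 0

/-! `J_m(λ(x)) = λ(x) • 1 + J_m(0)` varies only by a multiple of the identity matrix, which
commutes with everything. So the chain rule `∂ₛ f(J_m(λ)) = ∂ₛλ • f′(J_m(λ))` holds despite
noncommutativity; the claim is its entry `(s, i)`, summed over `s`. -/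

open Polynomial

section ChainRule

variable {𝕜 E 𝔸 : Type*} [NontriviallyNormedField 𝕜] [NormedAddCommGroup E] [NormedSpace 𝕜 E]
  [NormedRing 𝔸] [NormedAlgebra 𝕜 𝔸]

theorem hasFDerivAt_aeval_of_commute {a : E → 𝔸} {a' : E →L[𝕜] 𝔸} {x : E}
    (ha : HasFDerivAt a a' x) (hcomm : ∀ v, Commute (a x) (a' v)) (p : 𝕜[X]) :
    HasFDerivAt (fun y => aeval (a y) p) (aeval (a x) (derivative p) • a') x := by
  induction p using Polynomial.induction_on with
  | C c =>
    simp only [aeval_C]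
    exact (hasFDerivAt_const (𝕜 := 𝕜) _ x).congr_fderiv (by ext v; simp)
  | add p q hp hq =>
    simp only [map_add]
    exact (hp.fun_add hq).congr_fderiv (by ext v; simp [add_mul])
  | monomial n c ih =>
    rw [pow_succ, ← mul_assoc]
    generalize C c * X ^ n = p at ih ⊢
    simp only [map_mul, aeval_X]
    refine (ih.mul' ha).congr_fderiv ?_
    ext v
    have leibniz : derivative (p * X) = derivative p * X + p := by simp
    simp [leibniz, add_mul, mul_assoc, (hcomm v).eq, add_comm]

theorem hasFDerivAt_aeval_algebraMap_add {l : E → 𝕜} {l' : E →L[𝕜] 𝕜} {x : E}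
    (hl : HasFDerivAt l l' x) (b : 𝔸) (p : 𝕜[X]) :
    HasFDerivAt (fun y => aeval (algebraMap 𝕜 𝔸 (l y) + b) p)
      (l'.smulRight (aeval (algebraMap 𝕜 𝔸 (l x) + b) (derivative p))) x := by
  have ha : HasFDerivAt (fun y => algebraMap 𝕜 𝔸 (l y) + b) (l'.smulRight 1) x := by
    simpa only [Algebra.algebraMap_eq_smul_one] using (hl.smul_const (1 : 𝔸)).add_const b
  have hcomm (v : E) : Commute (algebraMap 𝕜 𝔸 (l x) + b) (l'.smulRight (1 : 𝔸) v) :=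
    (Commute.one_right _).smul_right _
  exact (hasFDerivAt_aeval_of_commute ha hcomm p).congr_fderiv (by ext v; simp)

open scoped Matrix.Norms.Operator in
theorem hasFDerivAt_aeval_algebraMap_add_apply {n : Type*} [Fintype n] [DecidableEq n]
    {l : E → 𝕜} {l' : E →L[𝕜] 𝕜} {x : E} (hl : HasFDerivAt l l' x) (B : Matrix n n 𝕜)
    (p : 𝕜[X]) (i j : n) :
    HasFDerivAt (fun y => aeval (algebraMap 𝕜 (Matrix n n 𝕜) (l y) + B) p i j)
      (l'.smulRight (aeval (algebraMap 𝕜 (Matrix n n 𝕜) (l x) + B) (derivative p) i j)) x := by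
  let entry : Matrix n n 𝕜 →L[𝕜] 𝕜 :=
    ⟨Matrix.entryLinearMap 𝕜 𝕜 i j, continuous_id.matrix_elem i j⟩
  refine (entry.hasFDerivAt.comp x (hasFDerivAt_aeval_algebraMap_add hl B p)).congr_fderiv ?_
  ext v
  rfl

end ChainRule

theorem pd_aeval_algebraMap_add_apply {m : ℕ} {n : Type*} [Fintype n] [DecidableEq n]
    {lam : (Fin m → ℝ) → ℝ} {x : Fin m → ℝ} (hlam : DifferentiableAt ℝ lam x)
    (B : Matrix n n ℝ) (f : ℝ[X]) (s : Fin m) (i j : n) :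
    pd (fun y => aeval (algebraMap ℝ (Matrix n n ℝ) (lam y) + B) f i j) s x =
      pd lam s x * aeval (algebraMap ℝ (Matrix n n ℝ) (lam x) + B) (derivative f) i j := by
  simp only [pd, (hasFDerivAt_aeval_algebraMap_add_apply hlam.hasFDerivAt B f i j).fderiv,
    ContinuousLinearMap.smulRight_apply, smul_eq_mul]

theorem jordanBlock_eq_algebraMap_add (m : ℕ) :
    jordanBlock m = fun t => algebraMap ℝ (Matrix (Fin m) (Fin m) ℝ) t + jordanBlock m 0 := by
  ext t i j
  rcases eq_or_ne i j with rfl | hij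
  · simp [jordanBlock, Matrix.algebraMap_matrix_apply]
  · simp [jordanBlock, Matrix.algebraMap_matrix_apply, Fin.val_inj, hij, hij.symm]

theorem divergence_poly_jordanBlock_general {m : ℕ} {lam : (Fin m → ℝ) → ℝ} {x : Fin m → ℝ}
    (hlam : DifferentiableAt ℝ lam x) (B : Matrix (Fin m) (Fin m) ℝ) (f : ℝ[X]) (i : Fin m) :
    ∑ s, pd (fun y => aeval (algebraMap ℝ (Matrix (Fin m) (Fin m) ℝ) (lam y) + B) f s i) s x =
      ∑ s, pd lam s x *
        aeval (algebraMap ℝ (Matrix (Fin m) (Fin m) ℝ) (lam x) + B) (derivative f) s i :=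
  Finset.sum_congr rfl fun s _ => pd_aeval_algebraMap_add_apply hlam B f s s i

theorem divergence_poly_jordanBlock {m : ℕ} (U : Set (Fin m → ℝ)) (hU : IsOpen U)
    (lam : (Fin m → ℝ) → ℝ) (hlam : ContDiffOn ℝ (⊤ : ℕ∞) lam U)
    (f : Polynomial ℝ) :
    ∀ i : Fin m, ∀ x ∈ U,
      (∑ s : Fin m, pd (fun y => (Polynomial.aeval (jordanBlock m (lam y)) f) s i) s x)
        = ∑ s : Fin m,
            pd lam s x *
              (Polynomial.aeval (jordanBlock m (lam x)) (Polynomial.derivative f)) s i := by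
  rw [jordanBlock_eq_algebraMap_add]
  exact fun i x hx => divergence_poly_jordanBlock_general
    ((hlam.contDiffAt (hU.mem_nhds hx)).differentiableAt (by simp)) (jordanBlock m 0) f i
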